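/- Let 𝛎 be a regular nonnegative σ-finite measure on P(ℝ^d) and let X be an (E𝛎)-regular Lagrangian flow in ℝ^d relative to b. Then the map 𝛍(t,μ) := X(t,·)_♯μ = ∫_{ℝ^d} δ_{X(t,x)} dμ(x) is a 𝛎-regular Lagrangian flow in P(ℝ^d) relative to b; in particular E(𝛍(t,·)_♯𝛎) = X(t,·)_♯(E𝛎) ≤ C·L^d for all t ∈ [0,T], and for 𝛎-a.e. μ the curve t ↦ 𝛍(t,μ) is weakly continuous, starts at μ, and solves the continuity equation d/dt μ_t + ∇·(b_t μ_t) = 0 in the sense of distributions. -/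

import Mathlib

open MeasureTheory Set Filter Metric Function
open scoped ENNReal NNReal Topology

noncomputable section

instance {Ω : Type*} [MeasurableSpace Ω] : MeasurableSpace (ProbabilityMeasure Ω) :=
  Subtype.instMeasurableSpace

variable {E : Type*} [NormedAddCommGroup E] [NormedSpace ℝ E] [MeasureSpace E]

/-- A curve of measures solves the continuity equation `d/dt μ_t + ∇·(b_t μ_t) = 0`
in the sense of distributions on `(0,T) × ℝ^d`. -/
def SolvesContinuityEquation (b : ℝ → E → E) (T : ℝ) (μ : ℝ → Measure E) : Prop :=
  ∀ φ : E → ℝ, ContDiff ℝ (⊤ : ℕ∞) φ → HasCompactSupport φ →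
  ∀ ψ : ℝ → ℝ, ContDiff ℝ (⊤ : ℕ∞) ψ → HasCompactSupport ψ → tsupport ψ ⊆ Ioo 0 T →
  ∫ t in Ioo 0 T,
      (deriv ψ t * ∫ x, φ x ∂(μ t) + ψ t * ∫ x, (fderiv ℝ φ x) (b t x) ∂(μ t)) = 0

/-- Weak-* continuity of a curve of measures on `[0,T]`. -/
def WeaklyContinuous (T : ℝ) (μ : ℝ → Measure E) : Prop :=
  ∀ φ : E → ℝ, Continuous φ → HasCompactSupport φ →
    ContinuousOn (fun t => ∫ x, φ x ∂(μ t)) (Icc 0 T)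

/-- Membership in the class `L∞₊([0,T]; L¹ ∩ L∞)`, phrased for the measures `μ t = w t · L^d`:
uniformly finite mass (`L¹`) and uniformly bounded density (`L∞`, nonnegativity is automatic). -/
def InL1LinftyClass (T : ℝ) (μ : ℝ → Measure E) : Prop :=
  ∃ C : ℝ≥0, ∀ t ∈ Icc 0 T, μ t Set.univ ≤ (C : ℝ≥0∞) ∧ μ t ≤ C • (volume : Measure E)

/-- Uniqueness for the continuity equation in `L∞₊([0,T]; L¹ ∩ L∞)`. -/
def CEUniqueness (b : ℝ → E → E) (T : ℝ) : Prop :=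
  ∀ μ₁ μ₂ : ℝ → Measure E, InL1LinftyClass T μ₁ → InL1LinftyClass T μ₂ →
    WeaklyContinuous T μ₁ → WeaklyContinuous T μ₂ →
    SolvesContinuityEquation b T μ₁ → SolvesContinuityEquation b T μ₂ →
    μ₁ 0 = μ₂ 0 → ∀ t ∈ Icc 0 T, μ₁ t = μ₂ t

/-- Existence for the continuity equation in `L∞₊([0,T]; L¹ ∩ L∞)`. -/
def CEExistence (b : ℝ → E → E) (T : ℝ) : Prop :=
  ∀ ν : Measure E, (∃ C : ℝ≥0, ν Set.univ ≤ (C : ℝ≥0∞) ∧ ν ≤ C • (volume : Measure E)) →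
    ∃ μ : ℝ → Measure E, μ 0 = ν ∧ InL1LinftyClass T μ ∧ WeaklyContinuous T μ ∧
      SolvesContinuityEquation b T μ

/-- `X` is a `ν`-regular Lagrangian flow relative to `b`:
(i) for `ν`-a.e. `x`, `t ↦ X t x` is an absolutely continuous integral solution of the ODE
`Ẋ = b_t(X)` on `[0,T]` with `X 0 x = x`;
(ii) `X(t,·)_♯ ν ≤ C · L^d` for all `t ∈ [0,T]`. -/
def IsRLF (b : ℝ → E → E) (T : ℝ) (ν : Measure E) (X : ℝ → E → E) : Prop :=
  (∀ᵐ x ∂ν,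
      X 0 x = x ∧
      IntegrableOn (fun s => b s (X s x)) (Icc 0 T) ∧
      ∀ t ∈ Icc 0 T, X t x = x + ∫ s in (0:ℝ)..t, b s (X s x)) ∧
  (∀ t ∈ Icc 0 T, AEMeasurable (X t) ν) ∧
  ∃ C : ℝ≥0, ∀ t ∈ Icc 0 T, Measure.map (X t) ν ≤ C • (volume : Measure E)

/-- `b` is Borel and locally integrable on `[0,T] × ℝ^d`. -/
def BorelLocIntegrable (b : ℝ → E → E) (T : ℝ) : Prop :=
  Measurable (Function.uncurry b) ∧
  ∀ R : ℝ, IntegrableOn (Function.uncurry b) (Icc 0 T ×ˢ Metric.closedBall (0 : E) R)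

/-- The expectation `E𝛎 ∈ M₊(ℝ^d)` of a measure `𝛎` on `P(ℝ^d)`:
`∫ φ d(E𝛎) = ∫ (∫ φ dμ) d𝛎(μ)`. -/
def expectation {Ω : Type*} [MeasurableSpace Ω] (ν : Measure (ProbabilityMeasure Ω)) :
    Measure Ω :=
  ν.bind fun μ => (μ : Measure Ω)

/-- A measure `𝛎` on `P(ℝ^d)` is regular if `E𝛎 ≤ C · L^d` for some constant `C`. -/
def IsRegularOnP (ν : Measure (ProbabilityMeasure E)) : Prop :=
  ∃ C : ℝ≥0, expectation ν ≤ C • (volume : Measure E)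

/-- `M` is a `𝛎`-regular Lagrangian flow in `P(ℝ^d)` relative to `b`:
(i) for `𝛎`-a.e. `μ`, `|b| ∈ L¹_loc((0,T) × ℝ^d; μ_t dt)`, `t ↦ M t μ` is weakly continuous,
starts at `μ`, and solves the continuity equation distributionally;
(ii) `E(M(t,·)_♯ 𝛎) ≤ C · L^d` for all `t ∈ [0,T]`. -/
def IsMeasureRLF (b : ℝ → E → E) (T : ℝ) (ν : Measure (ProbabilityMeasure E))
    (M : ℝ → ProbabilityMeasure E → ProbabilityMeasure E) : Prop :=
  (∀ᵐ μ ∂ν,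
      M 0 μ = μ ∧
      (∀ R > (0:ℝ), ∀ a c : ℝ, 0 < a → c < T →
        ∫⁻ t in Icc a c,
          ∫⁻ x in Metric.closedBall (0 : E) R, ‖b t x‖₊ ∂(M t μ : Measure E) ≠ ⊤) ∧
      (∀ φ : E → ℝ, Continuous φ → HasCompactSupport φ →
        ContinuousOn (fun t => ∫ x, φ x ∂(M t μ : Measure E)) (Icc 0 T)) ∧
      SolvesContinuityEquation b T (fun t => (M t μ : Measure E))) ∧
  (∀ t ∈ Icc 0 T, AEMeasurable (M t) ν) ∧
  ∃ C : ℝ≥0, ∀ t ∈ Icc 0 T,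
    expectation (Measure.map (M t) ν) ≤ C • (volume : Measure E)

/-! The flow `X` is only determined up to `E𝛎`-null sets and is only a.e. measurable in `x`, whereas
`X(t,·)_♯μ` has to be a map defined on all `μ`. Since almost every trajectory is continuous, `X`
agrees on a set of full measure with a jointly measurable map all of whose trajectories are
continuous, and a set of full `E𝛎`-measure has full `μ`-measure for `𝛎`-a.e. `μ`.

The identity `E(𝛍(t,·)_♯𝛎) = X(t,·)_♯(E𝛎)` follows by testing with functions. Compressibility then
gives `∫ ∫ ∫ |b| 1_{B_R} dμ_t dt d𝛎(μ) ≤ C ∫_0^T ∫_{B_R} |b| dx dt < ∞`, so the inner double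
integral is finite for `𝛎`-a.e. `μ`. For such `μ`, Fubini's theorem reduces the weak continuity
equation to the vanishing of `∫ d/dt (ψ(t) φ(X(t,x))) dt` along each absolutely continuous
trajectory. -/

section AbsoluteContinuity

variable {F F' : Type*} [PseudoMetricSpace F] [PseudoMetricSpace F'] {p q : ℝ}

theorem absolutelyContinuousOnInterval_of_dist_le_mul {f : ℝ → F} {g : ℝ → F'} (K : ℝ)
    (hg : AbsolutelyContinuousOnInterval g p q)
    (hfg : ∀ s ∈ uIcc p q, ∀ t ∈ uIcc p q, dist (f s) (f t) ≤ K * dist (g s) (g t)) :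
    AbsolutelyContinuousOnInterval f p q := by
  have hKg : Tendsto (fun I : ℕ × (ℕ → ℝ × ℝ) =>
      K * ∑ i ∈ Finset.range I.1, dist (g (I.2 i).1) (g (I.2 i).2))
      (AbsolutelyContinuousOnInterval.totalLengthFilter ⊓
        𝓟 (AbsolutelyContinuousOnInterval.disjWithin p q)) (𝓝 0) := by
    simpa only [mul_zero] using Tendsto.const_mul K hg
  refine squeeze_zero' (.of_forall fun I => Finset.sum_nonneg fun i _ => dist_nonneg) ?_ hKg
  filter_upwards [mem_inf_of_right (mem_principal_self _)] with I hI
  rw [Finset.mul_sum]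
  exact Finset.sum_le_sum fun i hi => hfg _ (hI.1 i hi).1 _ (hI.1 i hi).2

theorem absolutelyContinuousOnInterval_intervalIntegral {G : Type*} [NormedAddCommGroup G]
    [NormedSpace ℝ G] {g : ℝ → G} (hg : IntervalIntegrable g volume p q) :
    AbsolutelyContinuousOnInterval (fun t => ∫ s in p..t, g s) p q := by
  refine absolutelyContinuousOnInterval_of_dist_le_mul 1
    (hg.norm.absolutelyContinuousOnInterval_intervalIntegral left_mem_uIcc) fun s hs t ht => ?_
  have hgs : IntervalIntegrable g volume p s :=
    hg.mono_set (uIcc_subset_uIcc left_mem_uIcc hs)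
  have hgt : IntervalIntegrable g volume p t :=
    hg.mono_set (uIcc_subset_uIcc left_mem_uIcc ht)
  rw [one_mul, dist_eq_norm, dist_eq_norm, Real.norm_eq_abs,
    intervalIntegral.integral_interval_sub_left hgs hgt,
    intervalIntegral.integral_interval_sub_left hgs.norm hgt.norm]
  exact intervalIntegral.norm_integral_le_abs_integral_norm

end AbsoluteContinuity

section CaratheodorySolution

variable {F : Type*} [NormedAddCommGroup F] [NormedSpace ℝ F]

/-- The curve `γ` solves `γ̇ = b_t(γ)`, `γ(0) = x` on `[0,T]` in the sense of Carathéodory. The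
equation is encoded in integral form, so that `IsRLF` asks almost every trajectory to be such a
solution. -/
def IsCaratheodorySolution (b : ℝ → F → F) (T : ℝ) (x : F) (γ : ℝ → F) : Prop :=
  γ 0 = x ∧
  IntegrableOn (fun s => b s (γ s)) (Icc 0 T) ∧
  ∀ t ∈ Icc 0 T, γ t = x + ∫ s in (0 : ℝ)..t, b s (γ s)

namespace IsCaratheodorySolution

variable {b : ℝ → F → F} {T : ℝ} {x : F} {γ γ' : ℝ → F}

theorem congr (hT : 0 ≤ T) (hγ : IsCaratheodorySolution b T x γ) (h : EqOn γ' γ (Icc 0 T)) :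
    IsCaratheodorySolution b T x γ' := by
  obtain ⟨hγ0, hint, heq⟩ := hγ
  have hb : EqOn (fun s => b s (γ' s)) (fun s => b s (γ s)) (Icc 0 T) := fun s hs => by
    simp only [h hs]
  refine ⟨(h (left_mem_Icc.2 hT)).trans hγ0, hint.congr_fun hb.symm measurableSet_Icc,
    fun t ht => ?_⟩
  rw [h ht, heq t ht, intervalIntegral.integral_congr (hb.mono _)]
  rw [uIcc_of_le ht.1]
  exact Icc_subset_Icc_right ht.2

theorem intervalIntegrable (hT : 0 ≤ T) (hγ : IsCaratheodorySolution b T x γ) :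
    IntervalIntegrable (fun s => b s (γ s)) volume 0 T :=
  (intervalIntegrable_iff_integrableOn_Icc_of_le hT).2 hγ.2.1

theorem absolutelyContinuousOnInterval (hT : 0 ≤ T) (hγ : IsCaratheodorySolution b T x γ) :
    AbsolutelyContinuousOnInterval γ 0 T := by
  refine absolutelyContinuousOnInterval_of_dist_le_mul 1
    (absolutelyContinuousOnInterval_intervalIntegral (hγ.intervalIntegrable hT))
    fun s hs t ht => ?_
  rw [uIcc_of_le hT] at hs ht
  rw [hγ.2.2 s hs, hγ.2.2 t ht, dist_add_left, one_mul]

theorem continuousOn (hT : 0 ≤ T) (hγ : IsCaratheodorySolution b T x γ) :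
    ContinuousOn γ (Icc 0 T) := by
  simpa only [uIcc_of_le hT] using (hγ.absolutelyContinuousOnInterval hT).continuousOn

theorem ae_hasDerivAt [CompleteSpace F] (hT : 0 ≤ T) (hγ : IsCaratheodorySolution b T x γ) :
    ∀ᵐ t, t ∈ Ioo 0 T → HasDerivAt γ (b t (γ t)) t := by
  filter_upwards [(hγ.intervalIntegrable hT).ae_hasDerivAt_integral] with t ht htT
  have htT' : t ∈ uIcc 0 T := by
    rw [uIcc_of_le hT]
    exact Ioo_subset_Icc_self htT
  refine ((ht htT' 0 left_mem_uIcc).const_add x).congr_of_eventuallyEq ?_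
  filter_upwards [Icc_mem_nhds htT.1 htT.2] with s hs using hγ.2.2 s hs

theorem integral_deriv_mul_add_mul_fderiv_eq_zero [CompleteSpace F] (hT : 0 ≤ T)
    (hγ : IsCaratheodorySolution b T x γ) {φ : F → ℝ} (hφ : ContDiff ℝ 1 φ)
    (hφc : HasCompactSupport φ) {ψ : ℝ → ℝ} (hψ : ContDiff ℝ 1 ψ)
    (hψT : tsupport ψ ⊆ Ioo 0 T) :
    ∫ t in Ioo 0 T, (deriv ψ t * φ (γ t) + ψ t * fderiv ℝ φ (γ t) (b t (γ t))) = 0 := by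
  obtain ⟨K, hK⟩ := hφ.lipschitzWith_of_hasCompactSupport hφc one_ne_zero
  have hφγ : AbsolutelyContinuousOnInterval (fun t => φ (γ t)) 0 T :=
    absolutelyContinuousOnInterval_of_dist_le_mul K (hγ.absolutelyContinuousOnInterval hT)
      fun s _ t _ => hK.dist_le_mul (γ s) (γ t)
  have hψ0 : ψ 0 = 0 := image_eq_zero_of_notMem_tsupport fun h => (hψT h).1.false
  have hψT0 : ψ T = 0 := image_eq_zero_of_notMem_tsupport fun h => (hψT h).2.false
  have hchain : ∀ᵐ t, t ∈ Ioo 0 T →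
      fderiv ℝ φ (γ t) (b t (γ t)) = deriv (fun s => φ (γ s)) t := by
    filter_upwards [hγ.ae_hasDerivAt hT] with t ht htT
    exact (((hφ.differentiable one_ne_zero _).hasFDerivAt.comp_hasDerivAt t (ht htT)).deriv).symm
  calc
    _ = ∫ t in Ioo 0 T, (deriv ψ t * φ (γ t) + ψ t * deriv (fun s => φ (γ s)) t) :=
      setIntegral_congr_ae measurableSet_Ioo <| hchain.mono fun t ht htT => by rw [ht htT]
    _ = ∫ t in (0 : ℝ)..T, (deriv ψ t * φ (γ t) + ψ t * deriv (fun s => φ (γ s)) t) := by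
      rw [intervalIntegral.integral_of_le hT, integral_Ioc_eq_integral_Ioo]
    _ = ψ T * φ (γ T) - ψ 0 * φ (γ 0) :=
      hψ.contDiffOn.absolutelyContinuousOnInterval.integral_deriv_mul_eq_sub hφγ
    _ = 0 := by rw [hψ0, hψT0, zero_mul, zero_mul, sub_zero]

end IsCaratheodorySolution

end CaratheodorySolution

section ContinuousModification

variable {ι Ω F : Type*} [TopologicalSpace ι] [FrechetUrysohnSpace ι] [MeasurableSpace Ω]
  [TopologicalSpace F] [TopologicalSpace.PseudoMetrizableSpace F] [MeasurableSpace F] [BorelSpace F]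

theorem measurable_of_dense_of_continuous {s : Set ι} (hs : Dense s) {Y : ι → Ω → F}
    (hc : ∀ ω, Continuous fun i => Y i ω) (hm : ∀ i ∈ s, Measurable (Y i)) (i : ι) :
    Measurable (Y i) := by
  obtain ⟨u, hus, hui⟩ := mem_closure_iff_seq_limit.1 (hs i)
  exact measurable_of_tendsto_metrizable (fun n => hm (u n) (hus n))
    (tendsto_pi_nhds.2 fun ω => ((hc ω).tendsto i).comp hui)

theorem exists_continuous_modification [TopologicalSpace.SeparableSpace ι] [Nonempty F]
    {m : Measure Ω} {X : ι → Ω → F} (hm : ∀ i, AEMeasurable (X i) m)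
    (hc : ∀ᵐ ω ∂m, Continuous fun i => X i ω) :
    ∃ Y : ι → Ω → F, (∀ i, Measurable (Y i)) ∧ (∀ ω, Continuous fun i => Y i ω) ∧
      ∀ᵐ ω ∂m, ∀ i, Y i ω = X i ω := by
  classical
  obtain ⟨s, hs, hsd⟩ := TopologicalSpace.exists_countable_dense ι
  have : Countable s := hs.to_subtype
  have hmS : ∀ i : s, AEMeasurable (X i) m := fun i => hm i
  let P : Ω → (s → F) → Prop := fun ω _ => Continuous fun i => X i ω
  -- On `S` every path is continuous and the `X i`, `i ∈ s`, equal their measurable versions.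
  let S : Set Ω := aeSeqSet hmS P
  have hS : ∀ᵐ ω ∂m, ω ∈ S := aeSeq.measure_compl_aeSeqSet_eq_zero (p := P) hmS hc
  let c : F := Classical.arbitrary F
  let Y : ι → Ω → F := fun i => S.piecewise (X i) fun _ => c
  have hYc : ∀ ω, Continuous fun i => Y i ω := fun ω => by
    by_cases hω : ω ∈ S
    · simpa only [Y, piecewise_eq_of_mem _ _ _ hω] using
        aeSeq.fun_prop_of_mem_aeSeqSet hmS hω
    · simpa only [Y, piecewise_eq_of_notMem _ _ _ hω] using continuous_const
  have hYs : ∀ i ∈ s, Measurable (Y i) := fun i hi => by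
    have hYi : Y i = S.piecewise ((hmS ⟨i, hi⟩).mk (X i)) fun _ => c :=
      funext fun ω => by
        by_cases hω : ω ∈ S
        · simpa only [Y, piecewise_eq_of_mem _ _ _ hω] using
            (aeSeq.mk_eq_fun_of_mem_aeSeqSet hmS hω ⟨i, hi⟩).symm
        · simp only [Y, piecewise_eq_of_notMem _ _ _ hω]
    rw [hYi]
    exact (hmS ⟨i, hi⟩).measurable_mk.piecewise aeSeq.aeSeqSet_measurableSet measurable_const
  exact ⟨Y, measurable_of_dense_of_continuous hsd hYc hYs, hYc,
    hS.mono fun ω hω i => piecewise_eq_of_mem _ _ _ hω⟩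

end ContinuousModification

section Expectation

variable {Ω Ω' : Type*} [MeasurableSpace Ω] [MeasurableSpace Ω']
  {ν : Measure (ProbabilityMeasure Ω)}

theorem ae_ae_of_ae_expectation {p : Ω → Prop} (h : ∀ᵐ x ∂expectation ν, p x) :
    ∀ᵐ (μ : ProbabilityMeasure Ω) ∂ν, ∀ᵐ x ∂(μ : Measure Ω), p x :=
  Measure.ae_ae_of_ae_bind measurable_subtype_coe.aemeasurable h

theorem lintegral_expectation {f : Ω → ℝ≥0∞} (hf : Measurable f) :
    ∫⁻ x, f x ∂expectation ν = ∫⁻ μ : ProbabilityMeasure Ω, ∫⁻ x, f x ∂(μ : Measure Ω) ∂ν :=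
  Measure.lintegral_bind measurable_subtype_coe.aemeasurable hf.aemeasurable

theorem measurable_probabilityMeasure_map {f : Ω → Ω'} (hf : Measurable f) :
    Measurable fun μ : ProbabilityMeasure Ω => μ.map hf.aemeasurable :=
  ((Measure.measurable_map f hf).comp measurable_subtype_coe).subtype_mk

theorem expectation_map_map {f : Ω → Ω'} (hf : Measurable f) :
    expectation (ν.map fun μ => μ.map hf.aemeasurable) = (expectation ν).map f := by
  refine Measure.ext_of_lintegral _ fun g hg => ?_
  have hgm : Measurable fun μ : ProbabilityMeasure Ω' => ∫⁻ y, g y ∂(μ : Measure Ω') :=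
    (Measure.measurable_lintegral hg).comp measurable_subtype_coe
  rw [lintegral_expectation hg, lintegral_map hgm (measurable_probabilityMeasure_map hf),
    lintegral_map hg hf, lintegral_expectation (f := fun x => g (f x)) (hg.comp hf)]
  exact lintegral_congr fun μ => lintegral_map hg hf

end Expectation

section SpaceTimeLaw

variable {α β Ω G : Type*} [MeasurableSpace α] [MeasurableSpace β] [MeasurableSpace Ω]
  [NormedAddCommGroup G] {τ : Measure α} {m : Measure Ω} {Y : α → Ω → β}

/-- The measure `μ_t ⊗ τ(dt)` on space-time, where `μ_t = Y(t,·)_♯ m`. It is encoded as the image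
of `τ ⊗ m` under `(t, ω) ↦ (t, Y(t,ω))`, which makes Fubini's theorem directly available. -/
def spaceTimeLaw (τ : Measure α) (m : Measure Ω) (Y : α → Ω → β) : Measure (α × β) :=
  (τ.prod m).map fun p => (p.1, Y p.1 p.2)

theorem measurable_graph (hY : Measurable (uncurry Y)) :
    Measurable fun p : α × Ω => (p.1, Y p.1 p.2) :=
  measurable_fst.prodMk hY

instance [IsFiniteMeasure τ] [IsFiniteMeasure m] : IsFiniteMeasure (spaceTimeLaw τ m Y) :=
  Measure.isFiniteMeasure_map _ _

theorem lintegral_spaceTimeLaw [SFinite m] (hY : Measurable (uncurry Y)) {f : α × β → ℝ≥0∞}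
    (hf : Measurable f) :
    ∫⁻ p, f p ∂spaceTimeLaw τ m Y = ∫⁻ t, ∫⁻ y, f (t, y) ∂m.map (Y t) ∂τ := by
  rw [spaceTimeLaw, lintegral_map hf (measurable_graph hY),
    lintegral_prod (fun p => f (p.1, Y p.1 p.2)) (hf.comp (measurable_graph hY)).aemeasurable]
  exact lintegral_congr fun t =>
    (lintegral_map (hf.comp measurable_prodMk_left) hY.of_uncurry_left).symm

theorem lintegral_spaceTimeLaw_symm [SFinite τ] [SFinite m] (hY : Measurable (uncurry Y))
    {f : α × β → ℝ≥0∞} (hf : Measurable f) :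
    ∫⁻ p, f p ∂spaceTimeLaw τ m Y = ∫⁻ ω, ∫⁻ t, f (t, Y t ω) ∂τ ∂m := by
  rw [spaceTimeLaw, lintegral_map hf (measurable_graph hY),
    lintegral_prod_symm' (fun p => f (p.1, Y p.1 p.2)) (hf.comp (measurable_graph hY))]

theorem spaceTimeLaw_le_smul_prod [SFinite m] (hY : Measurable (uncurry Y)) {ρ : Measure β}
    [SFinite ρ] {C : ℝ≥0} (hC : ∀ᵐ t ∂τ, m.map (Y t) ≤ C • ρ) :
    spaceTimeLaw τ m Y ≤ C • τ.prod ρ := by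
  refine Measure.le_iff.2 fun s hs => ?_
  have hs1 : Measurable (s.indicator (1 : α × β → ℝ≥0∞)) := measurable_one.indicator hs
  calc
    spaceTimeLaw τ m Y s = ∫⁻ t, ∫⁻ y, s.indicator 1 (t, y) ∂m.map (Y t) ∂τ := by
      rw [← lintegral_indicator_one hs, lintegral_spaceTimeLaw hY hs1]
    _ ≤ ∫⁻ t, ∫⁻ y, s.indicator 1 (t, y) ∂(C • ρ) ∂τ :=
      lintegral_mono_ae <| hC.mono fun t ht => lintegral_mono' ht le_rfl
    _ = C • τ.prod ρ s := by
      simp_rw [lintegral_smul_measure]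
      rw [← lintegral_indicator_one hs, lintegral_prod _ hs1.aemeasurable,
        ENNReal.smul_def, smul_eq_mul, ← lintegral_const_mul _ hs1.lintegral_prod_right']
      rfl

theorem ae_integrable_map_of_spaceTimeLaw [SFinite τ] [SFinite m] (hY : Measurable (uncurry Y))
    {f : α × β → G} (hf : StronglyMeasurable f) (hfi : Integrable f (spaceTimeLaw τ m Y)) :
    ∀ᵐ t ∂τ, Integrable (fun y => f (t, y)) (m.map (Y t)) := by
  have hfY := (integrable_map_measure hf.aestronglyMeasurable
    (measurable_graph hY).aemeasurable).1 hfi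
  filter_upwards [hfY.prod_right_ae] with t ht
  exact (integrable_map_measure (hf.comp_measurable measurable_prodMk_left).aestronglyMeasurable
    hY.of_uncurry_left.aemeasurable).2 ht

theorem lintegral_setLIntegral_enorm_map_lt_top [SFinite m] (hY : Measurable (uncurry Y))
    {f : α × β → G} (hf : StronglyMeasurable f) {s : Set β} (hs : MeasurableSet s)
    (hfi : IntegrableOn f (univ ×ˢ s) (spaceTimeLaw τ m Y)) :
    ∫⁻ t, ∫⁻ y in s, ‖f (t, y)‖ₑ ∂m.map (Y t) ∂τ < ∞ := by
  have hus : MeasurableSet (univ ×ˢ s : Set (α × β)) := MeasurableSet.univ.prod hs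
  calc
    _ = ∫⁻ t, ∫⁻ y, (univ ×ˢ s).indicator (fun p => ‖f p‖ₑ) (t, y) ∂m.map (Y t) ∂τ := by
      refine lintegral_congr fun t => ?_
      rw [← lintegral_indicator hs]
      exact lintegral_congr fun y => by by_cases hy : y ∈ s <;> simp [hy]
    _ = ∫⁻ p in univ ×ˢ s, ‖f p‖ₑ ∂spaceTimeLaw τ m Y := by
      rw [← lintegral_spaceTimeLaw hY (hf.enorm.indicator hus), lintegral_indicator hus]
    _ < ∞ := hfi.hasFiniteIntegral

theorem integral_integral_map_swap [NormedSpace ℝ G] [SFinite τ] [SFinite m]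
    (hY : Measurable (uncurry Y)) {f : α × β → G} (hf : StronglyMeasurable f)
    (hfi : Integrable f (spaceTimeLaw τ m Y)) :
    ∫ t, ∫ y, f (t, y) ∂m.map (Y t) ∂τ = ∫ ω, ∫ t, f (t, Y t ω) ∂τ ∂m := by
  have hfY : Integrable (uncurry fun t ω => f (t, Y t ω)) (τ.prod m) :=
    (integrable_map_measure hf.aestronglyMeasurable (measurable_graph hY).aemeasurable).1 hfi
  rw [← integral_integral_swap hfY]
  exact integral_congr_ae <| .of_forall fun t =>
    integral_map hY.of_uncurry_left.aemeasurable
      (hf.comp_measurable measurable_prodMk_left).aestronglyMeasurable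

theorem integral_mul_integral_map_add [SFinite τ] [SFinite m] (hY : Measurable (uncurry Y))
    {u v : α → ℝ} (hu : StronglyMeasurable u) (hv : StronglyMeasurable v) {A B : ℝ}
    (hA : ∀ t, ‖u t‖ ≤ A) (hB : ∀ t, ‖v t‖ ≤ B) {f g : α × β → ℝ} (hf : StronglyMeasurable f)
    (hg : StronglyMeasurable g) (hfi : Integrable f (spaceTimeLaw τ m Y))
    (hgi : Integrable g (spaceTimeLaw τ m Y)) :
    ∫ t, (u t * ∫ y, f (t, y) ∂m.map (Y t) + v t * ∫ y, g (t, y) ∂m.map (Y t)) ∂τ =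
      ∫ ω, ∫ t, (u t * f (t, Y t ω) + v t * g (t, Y t ω)) ∂τ ∂m := by
  have hu' : StronglyMeasurable fun p : α × β => u p.1 := hu.comp_measurable measurable_fst
  have hv' : StronglyMeasurable fun p : α × β => v p.1 := hv.comp_measurable measurable_fst
  have hi : Integrable (fun p => u p.1 * f p + v p.1 * g p) (spaceTimeLaw τ m Y) :=
    (hfi.bdd_mul hu'.aestronglyMeasurable (.of_forall fun p => hA p.1)).add
      (hgi.bdd_mul hv'.aestronglyMeasurable (.of_forall fun p => hB p.1))
  refine (integral_congr_ae ?_).trans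
    (integral_integral_map_swap hY ((hu'.mul hf).add (hv'.mul hg)) hi)
  filter_upwards [ae_integrable_map_of_spaceTimeLaw hY hf hfi,
    ae_integrable_map_of_spaceTimeLaw hY hg hgi] with t hft hgt
  simp only [Pi.add_apply, Pi.mul_apply]
  rw [integral_add (hft.const_mul _) (hgt.const_mul _), integral_const_mul, integral_const_mul]

theorem ae_integrable_spaceTimeLaw_of_expectation [SFinite τ]
    {ν : Measure (ProbabilityMeasure Ω)} [SFinite (expectation ν)] (hY : Measurable (uncurry Y))
    {f : α × β → G} (hf : StronglyMeasurable f)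
    (hfi : Integrable f (spaceTimeLaw τ (expectation ν) Y)) :
    ∀ᵐ (μ : ProbabilityMeasure Ω) ∂ν, Integrable f (spaceTimeLaw τ (μ : Measure Ω) Y) := by
  have hinner : Measurable fun ω => ∫⁻ t, ‖f (t, Y t ω)‖ₑ ∂τ :=
    (hf.enorm.comp (measurable_graph hY)).lintegral_prod_left'
  have hmeas : Measurable fun μ : ProbabilityMeasure Ω =>
      ∫⁻ ω, ∫⁻ t, ‖f (t, Y t ω)‖ₑ ∂τ ∂(μ : Measure Ω) :=
    (Measure.measurable_lintegral hinner).comp measurable_subtype_coe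
  have hfin := hfi.hasFiniteIntegral
  rw [hasFiniteIntegral_iff_enorm, lintegral_spaceTimeLaw_symm hY hf.enorm,
    lintegral_expectation hinner] at hfin
  filter_upwards [ae_lt_top hmeas hfin.ne] with μ hμ
  exact ⟨hf.aestronglyMeasurable, by
    rwa [hasFiniteIntegral_iff_enorm, lintegral_spaceTimeLaw_symm hY hf.enorm]⟩

end SpaceTimeLaw

section ContinuityEquation

theorem stronglyMeasurable_fderiv_apply {α F : Type*} [MeasurableSpace α] [NormedAddCommGroup F]
    [NormedSpace ℝ F] [SecondCountableTopology F] [MeasurableSpace F] [BorelSpace F]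
    {φ : F → ℝ} (hφ : ContDiff ℝ 1 φ) {b : α → F → F} (hb : Measurable (uncurry b)) :
    StronglyMeasurable fun p : α × F => fderiv ℝ φ p.2 (b p.1 p.2) :=
  isBoundedBilinearMap_apply.continuous.comp_stronglyMeasurable <|
    ((hφ.continuous_fderiv one_ne_zero).stronglyMeasurable.comp_measurable
      measurable_snd).prodMk hb.stronglyMeasurable

theorem integrable_fderiv_apply {α F : Type*} [MeasurableSpace α] [NormedAddCommGroup F]
    [NormedSpace ℝ F] [SecondCountableTopology F] [MeasurableSpace F] [BorelSpace F]
    {φ : F → ℝ} (hφ : ContDiff ℝ 1 φ) (hφc : HasCompactSupport φ) {b : α → F → F}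
    (hb : Measurable (uncurry b)) {σ : Measure (α × F)}
    (hbi : ∀ R, IntegrableOn (uncurry b) (univ ×ˢ closedBall 0 R) σ) :
    Integrable (fun p : α × F => fderiv ℝ φ p.2 (b p.1 p.2)) σ := by
  obtain ⟨K, hK⟩ := hφ.lipschitzWith_of_hasCompactSupport hφc one_ne_zero
  obtain ⟨R, hR⟩ := hφc.isCompact.isBounded.subset_closedBall 0
  let A : Set (α × F) := univ ×ˢ closedBall 0 R
  have hA : MeasurableSet A := MeasurableSet.univ.prod measurableSet_closedBall
  have hbound : Integrable (A.indicator fun p => K * ‖b p.1 p.2‖) σ :=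
    (integrable_indicator_iff hA).2 ((hbi R).norm.const_mul K)
  refine hbound.mono' (stronglyMeasurable_fderiv_apply hφ hb).aestronglyMeasurable
    (.of_forall fun p => ?_)
  by_cases hp : p ∈ A
  · rw [indicator_of_mem hp]
    exact ContinuousLinearMap.le_of_opNorm_le _ (norm_fderiv_le_of_lipschitz ℝ hK) _
  · have hpφ : p.2 ∉ tsupport (fderiv ℝ φ) := fun h =>
      hp ⟨mem_univ _, hR (tsupport_fderiv_subset ℝ h)⟩
    rw [indicator_of_notMem hp, image_eq_zero_of_notMem_tsupport hpφ,
      zero_apply, norm_zero]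

variable {Ω : Type*} [MeasurableSpace Ω] {m : Measure Ω} [IsFiniteMeasure m]

theorem continuous_integral_map {ι F : Type*} [TopologicalSpace ι] [FirstCountableTopology ι]
    [TopologicalSpace F] [MeasurableSpace F] [OpensMeasurableSpace F] {Y : ι → Ω → F}
    (hm : ∀ i, Measurable (Y i)) (hc : ∀ ω, Continuous fun i => Y i ω) {φ : F → ℝ}
    (hφ : Continuous φ) {B : ℝ} (hB : ∀ x, ‖φ x‖ ≤ B) :
    Continuous fun i => ∫ x, φ x ∂m.map (Y i) := by
  have hmap : (fun i => ∫ x, φ x ∂m.map (Y i)) = fun i => ∫ ω, φ (Y i ω) ∂m :=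
    funext fun i => integral_map (hm i).aemeasurable hφ.aestronglyMeasurable
  rw [hmap]
  exact continuous_of_dominated (bound := fun _ => B)
    (fun i => (hφ.measurable.comp (hm i)).aestronglyMeasurable)
    (fun i => .of_forall fun ω => hB (Y i ω)) (integrable_const B)
    (.of_forall fun ω => hφ.comp (hc ω))

theorem solvesContinuityEquation_map [CompleteSpace E] [SecondCountableTopology E] [BorelSpace E]
    {b : ℝ → E → E} {T : ℝ} {x₀ : Ω → E} {Y : ℝ → Ω → E} (hT : 0 ≤ T)
    (hb : Measurable (uncurry b)) (hY : Measurable (uncurry Y))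
    (hode : ∀ᵐ ω ∂m, IsCaratheodorySolution b T (x₀ ω) fun t => Y t ω)
    (hbi : ∀ R, IntegrableOn (uncurry b) (univ ×ˢ closedBall 0 R)
      (spaceTimeLaw (volume.restrict (Icc 0 T)) m Y)) :
    SolvesContinuityEquation b T fun t => m.map (Y t) := by
  intro φ hφ hφc ψ hψ hψc hψT
  replace hφ : ContDiff ℝ 1 φ := hφ.of_le (mod_cast le_top)
  replace hψ : ContDiff ℝ 1 ψ := hψ.of_le (mod_cast le_top)
  obtain ⟨B, hB⟩ := hφ.continuous.bounded_above_of_compact_support hφc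
  obtain ⟨A, hA⟩ := hψ.continuous.bounded_above_of_compact_support hψc
  obtain ⟨A', hA'⟩ :=
    (hψ.continuous_deriv le_rfl).bounded_above_of_compact_support hψc.deriv
  have hφm : StronglyMeasurable fun p : ℝ × E => φ p.2 :=
    hφ.continuous.stronglyMeasurable.comp_measurable measurable_snd
  have hφi : Integrable (fun p => φ p.2) (spaceTimeLaw (volume.restrict (Icc 0 T)) m Y) :=
    .of_bound hφm.aestronglyMeasurable B (.of_forall fun p => hB p.2)
  rw [← integral_Icc_eq_integral_Ioo]
  calc
    _ = ∫ ω, (∫ t in Icc 0 T,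
          (deriv ψ t * φ (Y t ω) + ψ t * fderiv ℝ φ (Y t ω) (b t (Y t ω)))) ∂m :=
      integral_mul_integral_map_add hY (hψ.continuous_deriv le_rfl).stronglyMeasurable
        hψ.continuous.stronglyMeasurable hA' hA hφm (stronglyMeasurable_fderiv_apply hφ hb) hφi
        (integrable_fderiv_apply hφ hφc hb hbi)
    _ = 0 := integral_eq_zero_of_ae <| hode.mono fun ω hω =>
      integral_Icc_eq_integral_Ioo.trans
        (hω.integral_deriv_mul_add_mul_fderiv_eq_zero hT hφ hφc hψ hψT)

end ContinuityEquation

section RegularLagrangianFlow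

namespace IsRLF

variable {b : ℝ → E → E} {T : ℝ} {m : Measure E} {X Y : ℝ → E → E}

theorem ae_isCaratheodorySolution (hX : IsRLF b T m X) :
    ∀ᵐ x ∂m, IsCaratheodorySolution b T x fun t => X t x :=
  hX.1

theorem congr (hT : 0 ≤ T) (hX : IsRLF b T m X)
    (hYX : ∀ᵐ x ∂m, EqOn (fun t => Y t x) (fun t => X t x) (Icc 0 T)) : IsRLF b T m Y := by
  have hYXt : ∀ t ∈ Icc 0 T, Y t =ᵐ[m] X t := fun t ht => hYX.mono fun x hx => hx ht
  obtain ⟨C, hC⟩ := hX.2.2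
  refine ⟨?_, fun t ht => (hX.2.1 t ht).congr (hYXt t ht).symm, C, fun t ht => ?_⟩
  · filter_upwards [hX.ae_isCaratheodorySolution, hYX] with x hx hYXx using hx.congr hT hYXx
  · exact (Measure.map_congr (hYXt t ht)).trans_le (hC t ht)

theorem sigmaFinite [SigmaFinite (volume : Measure E)] (hT : 0 ≤ T) (hX : IsRLF b T m X) :
    SigmaFinite m := by
  have hX0 : X 0 =ᵐ[m] id := hX.ae_isCaratheodorySolution.mono fun x hx => hx.1
  obtain ⟨-, -, C, hC⟩ := hX
  have hm : m ≤ C • (volume : Measure E) := by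
    simpa only [Measure.map_congr hX0, Measure.map_id] using hC 0 (left_mem_Icc.2 hT)
  exact Measure.sigmaFinite_of_le _ hm

theorem integrableOn_spaceTimeLaw [SFinite (volume : Measure E)] [SFinite m]
    (hX : IsRLF b T m X) (hXm : Measurable (uncurry X)) (hb : BorelLocIntegrable b T) (R : ℝ) :
    IntegrableOn (uncurry b) (univ ×ˢ closedBall 0 R)
      (spaceTimeLaw (volume.restrict (Icc 0 T)) m X) := by
  obtain ⟨-, -, C, hC⟩ := hX
  have hle : spaceTimeLaw (volume.restrict (Icc 0 T)) m X ≤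
      C • (volume.restrict (Icc 0 T)).prod (volume : Measure E) :=
    spaceTimeLaw_le_smul_prod hXm (ae_restrict_of_forall_mem measurableSet_Icc hC)
  refine IntegrableOn.mono_measure ?_ hle
  have hrestrict : ((volume.restrict (Icc 0 T)).prod (volume : Measure E)).restrict
      (univ ×ˢ closedBall 0 R) = volume.restrict (Icc 0 T ×ˢ closedBall 0 R) := by
    rw [← Measure.prod_restrict, Measure.restrict_univ, Measure.prod_restrict,
      Measure.volume_eq_prod]
  rw [IntegrableOn, Measure.restrict_smul, hrestrict]
  exact (hb.2 R).smul_measure_nnreal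

variable [BorelSpace E]

theorem exists_continuous_modification (hT : 0 ≤ T) (hX : IsRLF b T m X) :
    ∃ Y : ℝ → E → E, Measurable (uncurry Y) ∧ (∀ x, Continuous fun t => Y t x) ∧
      ∀ᵐ x ∂m, EqOn (fun t => Y t x) (fun t => X t x) (Icc 0 T) := by
  have hc : ∀ᵐ x ∂m, Continuous fun t : Icc 0 T => X t x :=
    hX.ae_isCaratheodorySolution.mono fun x hx => (hx.continuousOn hT).domRestrict
  obtain ⟨Y, hYm, hYc, hYX⟩ :=
    _root_.exists_continuous_modification (X := fun t : Icc 0 T => X t)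
      (fun t => hX.2.1 t t.2) hc
  have hYpc : ∀ x, Continuous fun t => Y (projIcc 0 T hT t) x :=
    fun x => (hYc x).comp continuous_projIcc
  refine ⟨fun t => Y (projIcc 0 T hT t),
    measurable_uncurry_of_continuous_of_measurable hYpc fun t => hYm _, hYpc,
    hYX.mono fun x hx t ht => ?_⟩
  simp only [projIcc_of_mem hT ht, hx]

theorem ae_integrableOn_spaceTimeLaw [SecondCountableTopology E] [SFinite (volume : Measure E)]
    {ν : Measure (ProbabilityMeasure E)} [SFinite (expectation ν)]
    (hX : IsRLF b T (expectation ν) X) (hXm : Measurable (uncurry X))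
    (hb : BorelLocIntegrable b T) :
    ∀ᵐ (μ : ProbabilityMeasure E) ∂ν, ∀ R, IntegrableOn (uncurry b) (univ ×ˢ closedBall 0 R)
      (spaceTimeLaw (volume.restrict (Icc 0 T)) (μ : Measure E) X) := by
  have hA : ∀ R : ℝ, MeasurableSet (univ ×ˢ closedBall 0 R : Set (ℝ × E)) := fun R =>
    MeasurableSet.univ.prod measurableSet_closedBall
  have hn : ∀ᵐ (μ : ProbabilityMeasure E) ∂ν, ∀ n : ℕ, IntegrableOn (uncurry b)
      (univ ×ˢ closedBall 0 n) (spaceTimeLaw (volume.restrict (Icc 0 T)) (μ : Measure E) X) := by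
    refine ae_all_iff.2 fun n => ?_
    simp only [← integrable_indicator_iff (hA n)]
    exact ae_integrable_spaceTimeLaw_of_expectation hXm
      (hb.1.stronglyMeasurable.indicator (hA n))
      ((integrable_indicator_iff (hA n)).2 (hX.integrableOn_spaceTimeLaw hXm hb n))
  filter_upwards [hn] with μ hμ R
  obtain ⟨n, hRn⟩ := exists_nat_ge R
  exact (hμ n).mono_set (prod_mono_right (closedBall_subset_closedBall hRn))

theorem isMeasureRLF_map [CompleteSpace E] [SecondCountableTopology E]
    [SigmaFinite (volume : Measure E)] {ν : Measure (ProbabilityMeasure E)} (hT : 0 ≤ T)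
    (hb : BorelLocIntegrable b T) (hX : IsRLF b T (expectation ν) X)
    (hXm : Measurable (uncurry X)) (hXc : ∀ x, Continuous fun t => X t x) :
    IsMeasureRLF b T ν fun t μ => μ.map (hXm.of_uncurry_left (x := t)).aemeasurable := by
  have hXt : ∀ t, Measurable (X t) := fun t => hXm.of_uncurry_left
  have := hX.sigmaFinite hT
  refine ⟨?_, fun t _ => (measurable_probabilityMeasure_map (hXt t)).aemeasurable, ?_⟩
  · filter_upwards [ae_ae_of_ae_expectation hX.ae_isCaratheodorySolution,
      hX.ae_integrableOn_spaceTimeLaw hXm hb] with μ hode hbi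
    refine ⟨Subtype.ext ?_, fun R _ a c ha hc => ?_, fun φ hφ hφc => ?_,
      solvesContinuityEquation_map hT hb.1 hXm hode hbi⟩
    · have hX0 : X 0 =ᵐ[(μ : Measure E)] id := hode.mono fun x hx => hx.1
      exact (Measure.map_congr hX0).trans Measure.map_id
    · refine ((lintegral_mono_set (Icc_subset_Icc ha.le hc.le)).trans_lt ?_).ne
      exact lintegral_setLIntegral_enorm_map_lt_top hXm hb.1.stronglyMeasurable
        measurableSet_closedBall (hbi R)
    · obtain ⟨B, hB⟩ := hφ.bounded_above_of_compact_support hφc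
      exact (continuous_integral_map hXt hXc hφ hB).continuousOn
  · obtain ⟨-, -, C, hC⟩ := hX
    exact ⟨C, fun t ht => (expectation_map_map (hXt t)).trans_le (hC t ht)⟩

end IsRLF

theorem pushforward_RLF_is_measure_RLF_general [CompleteSpace E] [SecondCountableTopology E]
    [BorelSpace E] [SigmaFinite (volume : Measure E)] {b : ℝ → E → E} {T : ℝ} (hT : 0 ≤ T)
    (hb : BorelLocIntegrable b T) {ν : Measure (ProbabilityMeasure E)} {X : ℝ → E → E}
    (hX : IsRLF b T (expectation ν) X) :
    ∃ M : ℝ → ProbabilityMeasure E → ProbabilityMeasure E,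
      (∀ᵐ μ ∂ν, ∀ t ∈ Icc 0 T, (M t μ : Measure E) = (μ : Measure E).map (X t)) ∧
      IsMeasureRLF b T ν M ∧
      ∀ t ∈ Icc 0 T, expectation (ν.map (M t)) = (expectation ν).map (X t) := by
  obtain ⟨Y, hYm, hYc, hYX⟩ := hX.exists_continuous_modification hT
  refine ⟨fun t μ => μ.map (hYm.of_uncurry_left (x := t)).aemeasurable, ?_,
    (hX.congr hT hYX).isMeasureRLF_map hT hb hYm hYc, fun t ht => ?_⟩
  · filter_upwards [ae_ae_of_ae_expectation hYX] with μ hμ t ht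
    exact Measure.map_congr (hμ.mono fun x hx => hx ht)
  · exact (expectation_map_map hYm.of_uncurry_left).trans
      (Measure.map_congr (hYX.mono fun x hx => hx ht))

end RegularLagrangianFlow

/-- The pushforward of an `(E𝛎)`-RLF is a `𝛎`-RLF in `P(ℝ^d)`.
If `𝛎` is regular and `X` is an `(E𝛎)`-RLF in `ℝ^d` relative to `b`, then
`𝛍(t,μ) := X(t,·)_♯ μ = ∫ δ_{X(t,x)} dμ(x)` is a `𝛎`-RLF in `P(ℝ^d)` relative to `b`;
in particular `E(𝛍(t,·)_♯𝛎) = X(t,·)_♯(E𝛎) ≤ C·L^d` for all `t ∈ [0,T]`, and for `𝛎`-a.e. `μ`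
the curve `t ↦ 𝛍(t,μ)` is weakly continuous, starts at `μ`, and solves the continuity
equation distributionally (all of which is part of `IsMeasureRLF`). -/
theorem pushforward_RLF_is_measure_RLF {d : ℕ} (T : ℝ) (hT : 0 < T)
    (b : ℝ → EuclideanSpace ℝ (Fin d) → EuclideanSpace ℝ (Fin d))
    (hb : BorelLocIntegrable b T)
    (ν : Measure (ProbabilityMeasure (EuclideanSpace ℝ (Fin d))))
    [SigmaFinite ν] (hreg : IsRegularOnP ν)
    (X : ℝ → EuclideanSpace ℝ (Fin d) → EuclideanSpace ℝ (Fin d))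
    (hX : IsRLF b T (expectation ν) X) :
    ∃ M : ℝ → ProbabilityMeasure (EuclideanSpace ℝ (Fin d)) →
        ProbabilityMeasure (EuclideanSpace ℝ (Fin d)),
      (∀ᵐ μ ∂ν, ∀ t ∈ Icc 0 T,
        (M t μ : Measure (EuclideanSpace ℝ (Fin d))) =
          Measure.map (X t) (μ : Measure (EuclideanSpace ℝ (Fin d)))) ∧
      IsMeasureRLF b T ν M ∧
      (∀ t ∈ Icc 0 T,
        expectation (Measure.map (M t) ν) = Measure.map (X t) (expectation ν)) ∧
      ∃ C : ℝ≥0, ∀ t ∈ Icc 0 T,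
        expectation (Measure.map (M t) ν) ≤
          C • (volume : Measure (EuclideanSpace ℝ (Fin d))) := by
  obtain ⟨M, hM, hflow, hE⟩ := pushforward_RLF_is_measure_RLF_general hT.le hb hX
  exact ⟨M, hM, hflow, hE, hflow.2.2⟩

end
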